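/- Let k, l ≥ 2 be multiplicatively independent integers, let u ∈ Σ_k* and v ∈ Σ_l* be words beginning with nonzero digits, and let t ≥ 0. Then there exist arbitrarily large integers N (which may be taken of the form N = k^i l^j) such that (N)_k = u 0 x 0^{t+1} for some x ∈ Σ_k* and (N)_l = v 0 y 0^{t+1} for some y ∈ Σ_l*. -/

import Mathlib

open Filter

/-- The upper density of a set of natural numbers:
`limsup_{n → ∞} |A ∩ [0,n)| / n`. -/
noncomputable def upperDensity (A : Set ℕ) : ℝ :=
  limsup (fun n : ℕ => (Nat.card ↥(A ∩ Set.Iio n) : ℝ) / n) atTop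

/-- The base-`k` representation of `n` as a word over `Σ_k = Fin k`, read starting
from the leading digit, with no leading zeros (junk value `[]` if `k ≤ 1`;
the representation of `0` is the empty word). -/
def kRepr (k n : ℕ) : List (Fin k) :=
  if h : 1 < k then
    (Nat.digits k n).reverse.pmap (fun d hd => (⟨d, hd⟩ : Fin k))
      (fun d hd => Nat.digits_lt_base h (List.mem_reverse.mp hd))
  else []

/-- Run a deterministic automaton with transition function `δ` from the state `s`
on the word `w`, reading `w` from the left: the extended transition function `δ*`. -/
def run {S : Type*} {k : ℕ} (δ : S → Fin k → S) (s : S) (w : List (Fin k)) : S :=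
  w.foldl δ s

/-- A sequence `a : ℕ → Ω` is `k`-automatic if it is produced by a deterministic
finite automaton with output, reading the base-`k` representation of the input
starting from the leading digit. -/
def IsAutomatic {Ω : Type*} (k : ℕ) (a : ℕ → Ω) : Prop :=
  ∃ (S : Type) (_ : Fintype S) (δ : S → Fin k → S) (s₀ : S) (τ : S → Ω),
    ∀ n : ℕ, a n = τ (run δ s₀ (kRepr k n))

/-- Two integers are multiplicatively independent if no nontrivial powers of them
coincide (equivalently, they are not both powers of a common integer). -/
def MultIndep (k l : ℕ) : Prop :=
  ∀ i j : ℕ, k ^ i = l ^ j → i = 0 ∧ j = 0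

/-- The finite word `w` occurs in the sequence `a` at position `i`. -/
def OccursAt {Ω : Type*} (a : ℕ → Ω) (w : List Ω) (i : ℕ) : Prop :=
  ∀ (j : ℕ) (h : j < w.length), w.get ⟨j, h⟩ = a (i + j)

/-- The finite word `w` is a factor of the sequence `a`. -/
def IsFactor {Ω : Type*} (a : ℕ → Ω) (w : List Ω) : Prop :=
  ∃ i : ℕ, OccursAt a w i

/-- A sequence is uniformly recurrent if each of its factors occurs in it with
bounded gaps. -/
def UniformlyRecurrent {Ω : Type*} (a : ℕ → Ω) : Prop :=
  ∀ w : List Ω, IsFactor a w →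
    ∃ C : ℕ, ∀ N : ℕ, ∃ i : ℕ, N ≤ i ∧ i ≤ N + C ∧ OccursAt a w i

/-- A strongly connected component of an automaton: a nonempty set of states closed
under all transitions and such that each of its states can be reached from each
other one by some word. -/
def IsSCC {S : Type*} {k : ℕ} (δ : S → Fin k → S) (C : Set S) : Prop :=
  C.Nonempty ∧ (∀ s ∈ C, ∀ u : Fin k, δ s u ∈ C) ∧
    ∀ s ∈ C, ∀ s' ∈ C, ∃ w : List (Fin k), run δ s w = s'

/-!
Let `θ = log_k l`, which is irrational. By Kronecker's theorem the numbers `j θ - m` are dense in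
`ℝ`, even for large `j`, so the ratios `l ^ j / k ^ m` are dense in the positive reals. Hence
`⌊l ^ j / k ^ m⌋` can be made equal to the value of the word `u 0`, i.e. `(l ^ j)_k` begins with
`u 0`; symmetrically `(k ^ i)_l` begins with `v 0` for suitable large `i`. Multiplying `l ^ j` by
`k ^ i` only appends `i` zeros in base `k`, and multiplying `k ^ i` by `l ^ j` only appends `j`
zeros in base `l`, so `N = k ^ i * l ^ j` satisfies both requirements.
-/

theorem map_val_kRepr {k : ℕ} (hk : 1 < k) (n : ℕ) :
    (kRepr k n).map Fin.val = (Nat.digits k n).reverse := by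
  simp [kRepr, hk, List.map_pmap, List.pmap_eq_map]

theorem kRepr_eq_iff {k : ℕ} (hk : 1 < k) {n : ℕ} {w : List (Fin k)} :
    kRepr k n = w ↔ Nat.digits k n = (w.map Fin.val).reverse := by
  rw [← (List.map_injective_iff.2 Fin.val_injective).eq_iff, map_val_kRepr hk,
    List.reverse_eq_iff]

theorem kRepr_zero (k : ℕ) : kRepr k 0 = [] := by
  simp [kRepr]

theorem exists_kRepr_eq {k : ℕ} (hk : 1 < k) {w : List (Fin k)}
    (hw : ∀ hne : w ≠ [], (w.head hne : ℕ) ≠ 0) : ∃ n, kRepr k n = w := by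
  refine ⟨Nat.ofDigits k (w.map Fin.val).reverse, (kRepr_eq_iff hk).2 ?_⟩
  exact Nat.digits_ofDigits k hk _ (by simp) (by simpa using hw)

theorem digits_div_pow {b : ℕ} (hb : 1 < b) (n m : ℕ) :
    Nat.digits b (n / b ^ m) = (Nat.digits b n).drop m := by
  induction m generalizing n with
  | zero => simp
  | succ m ih =>
    rcases eq_or_ne n 0 with rfl | hn
    · simp
    · rw [pow_succ', ← Nat.div_div_eq_div_mul, ih, Nat.digits_eq_cons_digits_div hb hn,
        List.drop_succ_cons]

theorem kRepr_div_pow_prefix (k n m : ℕ) : kRepr k (n / k ^ m) <+: kRepr k n := by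
  by_cases hk : 1 < k
  · rw [← List.prefix_map_iff_of_injective Fin.val_injective, map_val_kRepr hk,
      map_val_kRepr hk, digits_div_pow hk, List.reverse_prefix]
    exact List.drop_suffix m _
  · simp [kRepr, hk]

theorem kRepr_pow_mul {k : ℕ} (hk : 1 < k) {z : Fin k} (hz : (z : ℕ) = 0) {n : ℕ}
    (hn : n ≠ 0) (i : ℕ) : kRepr k (k ^ i * n) = kRepr k n ++ List.replicate i z := by
  rw [kRepr_eq_iff hk, Nat.digits_base_pow_mul hk (Nat.pos_of_ne_zero hn), List.map_append,
    map_val_kRepr hk, List.map_replicate, hz, List.reverse_append, List.reverse_replicate,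
    List.reverse_reverse]

theorem exists_kRepr_pow_mul_eq {k : ℕ} (hk : 1 < k) {z : Fin k} (hz : (z : ℕ) = 0)
    {w : List (Fin k)} {n : ℕ} (hn : n ≠ 0) (hw : w <+: kRepr k n) {r i : ℕ} (hi : r ≤ i) :
    ∃ x, kRepr k (k ^ i * n) = w ++ (x ++ List.replicate r z) := by
  obtain ⟨x, hx⟩ := hw
  refine ⟨x ++ List.replicate (i - r) z, ?_⟩
  rw [kRepr_pow_mul hk hz hn, ← hx, List.append_assoc, List.append_assoc,
    List.replicate_append_replicate, Nat.sub_add_cancel hi]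

theorem frequently_exists_nat_mul_sub_int_mem {θ : ℝ} (hθ : Irrational θ) {U : Set ℝ}
    (hU : IsOpen U) (hne : U.Nonempty) : ∃ᶠ n : ℕ in atTop, ∃ m : ℤ, n * θ - m ∈ U := by
  obtain ⟨c, hc⟩ := hne
  have hdense : DenseRange (fun n : ℤ => n • (θ : UnitAddCircle)) :=
    AddCircle.denseRange_zsmul_coe_iff.2 (by rwa [div_one])
  have hcluster : MapClusterPt (c : UnitAddCircle) atTop (fun n : ℕ => n • (θ : UnitAddCircle)) :=
    ((mapClusterPt_atTop_nsmul_tfae _ _).out 0 3).2 (hdense _)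
  have hnhds : ((↑) : ℝ → UnitAddCircle) '' U ∈ nhds (c : UnitAddCircle) :=
    (QuotientAddGroup.isOpenMap_coe U hU).mem_nhds (Set.mem_image_of_mem _ hc)
  refine (hcluster.frequently hnhds).mono ?_
  rintro n ⟨y, hy, hyn⟩
  obtain ⟨m, hm⟩ : ∃ m : ℤ, m • (1 : ℝ) = n * θ - y := by
    rw [← AddCircle.coe_eq_zero_iff, AddCircle.coe_sub, hyn, ← nsmul_eq_mul,
      AddCircle.coe_nsmul, sub_self]
  refine ⟨m, ?_⟩
  rw [zsmul_one] at hm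
  rwa [hm, sub_sub_cancel]

namespace MultIndep

variable {k l : ℕ}

theorem symm (h : MultIndep k l) : MultIndep l k :=
  fun i j hij => (h j i hij.symm).symm

theorem irrational_logb (h : MultIndep k l) (hk : 1 < k) (hl : 1 < l) :
    Irrational (Real.logb k l) := by
  rintro ⟨q, hq⟩
  have hk' : (1 : ℝ) < k := by exact_mod_cast hk
  have hl' : (1 : ℝ) < l := by exact_mod_cast hl
  have hq0 : 0 ≤ q := by
    have : (0 : ℝ) ≤ q := hq ▸ (Real.logb_pos hk' hl').le
    exact_mod_cast this
  lift q to ℚ≥0 using hq0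
  have hnum : (q.num : ℝ) = Real.logb k l * q.den := by
    rw [← hq]
    exact_mod_cast q.mul_den_eq_num.symm
  have hpow : (k : ℝ) ^ q.num = (l : ℝ) ^ q.den := by
    rw [← Real.rpow_natCast, hnum, Real.rpow_mul (by positivity),
      Real.rpow_logb (by positivity) hk'.ne' (by positivity), Real.rpow_natCast]
  exact q.den_ne_zero (h _ _ (by exact_mod_cast hpow)).2

theorem frequently_exists_pow_div_zpow_mem (h : MultIndep k l) (hk : 1 < k) (hl : 1 < l)
    {U : Set ℝ} (hU : IsOpen U) {x : ℝ} (hx : 0 < x) (hxU : x ∈ U) :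
    ∃ᶠ j : ℕ in atTop, ∃ m : ℤ, (l : ℝ) ^ j / (k : ℝ) ^ m ∈ U := by
  have hk0 : (0 : ℝ) < k := by positivity
  have hk1 : (k : ℝ) ≠ 1 := by exact_mod_cast hk.ne'
  have hopen : IsOpen ((fun y : ℝ => (k : ℝ) ^ y) ⁻¹' U) :=
    hU.preimage (Real.continuous_const_rpow hk0.ne')
  have hmem : Real.logb k x ∈ (fun y : ℝ => (k : ℝ) ^ y) ⁻¹' U := by
    rwa [Set.mem_preimage, Real.rpow_logb hk0 hk1 hx]
  refine (frequently_exists_nat_mul_sub_int_mem (h.irrational_logb hk hl) hopen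
    ⟨_, hmem⟩).mono ?_
  rintro j ⟨m, hm⟩
  refine ⟨m, ?_⟩
  rwa [Set.mem_preimage, Real.rpow_sub hk0, mul_comm, Real.rpow_mul hk0.le,
    Real.rpow_logb hk0 hk1 (by positivity), Real.rpow_natCast, Real.rpow_intCast] at hm

theorem frequently_exists_pow_div_pow_eq (h : MultIndep k l) (hk : 1 < k) (hl : 1 < l)
    {w : ℕ} (hw : w ≠ 0) : ∃ᶠ j in atTop, ∃ m, l ^ j / k ^ m = w := by
  have hmid : (w : ℝ) + 1 / 2 ∈ Set.Ioo (w : ℝ) (w + 1) := ⟨by linarith, by linarith⟩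
  refine ((h.frequently_exists_pow_div_zpow_mem hk hl isOpen_Ioo (by positivity)
    hmid).and_eventually (eventually_ge_atTop (w + 1))).mono ?_
  rintro j ⟨⟨m, hwm, hmw⟩, hj⟩
  have hm : 0 ≤ m := by
    by_contra! hm
    have hlj : (w : ℝ) + 1 ≤ l ^ j := by exact_mod_cast hj.trans (Nat.lt_pow_self hl).le
    have : (l : ℝ) ^ j ≤ l ^ j / k ^ m :=
      le_div_self (by positivity) (by positivity)
        (zpow_le_one_of_nonpos₀ (by exact_mod_cast hk.le) hm.le)
    linarith
  lift m to ℕ using hm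
  refine ⟨m, ?_⟩
  rw [zpow_natCast] at hwm hmw
  rw [← Nat.floor_div_eq_div (K := ℝ), Nat.cast_pow, Nat.cast_pow]
  exact Nat.floor_eq_on_Ico w _ ⟨hwm.le, hmw⟩

theorem frequently_prefix_kRepr_pow (h : MultIndep k l) (hk : 1 < k) (hl : 1 < l)
    {w : List (Fin k)} (hne : w ≠ []) (hw : (w.head hne : ℕ) ≠ 0) :
    ∃ᶠ j in atTop, w <+: kRepr k (l ^ j) := by
  obtain ⟨n, rfl⟩ := exists_kRepr_eq hk fun _ => hw
  have hn : n ≠ 0 := by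
    rintro rfl
    exact hne (kRepr_zero k)
  refine (h.frequently_exists_pow_div_pow_eq hk hl hn).mono ?_
  rintro j ⟨m, rfl⟩
  exact kRepr_div_pow_prefix k _ m

end MultIndep

/-- There exist arbitrarily large integers `N`, which may be taken of the form
`N = k^i l^j`, whose base-`k` representation is `u 0 x 0^{t+1}` and whose base-`l`
representation is `v 0 y 0^{t+1}`. -/
theorem exists_large_doubly_prescribed (k l : ℕ) (hk : 2 ≤ k) (hl : 2 ≤ l)
    (hind : MultIndep k l)
    (u : List (Fin k)) (v : List (Fin l))
    (hu : u ≠ []) (hu0 : (u.head hu : ℕ) ≠ 0)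
    (hv : v ≠ []) (hv0 : (v.head hv : ℕ) ≠ 0)
    (t : ℕ) (z₀ : Fin k) (hz₀ : (z₀ : ℕ) = 0) (z₀' : Fin l) (hz₀' : (z₀' : ℕ) = 0) :
    ∀ M : ℕ, ∃ N : ℕ, M < N ∧ (∃ i j : ℕ, N = k ^ i * l ^ j) ∧
      (∃ x : List (Fin k), kRepr k N = u ++ z₀ :: (x ++ List.replicate (t + 1) z₀)) ∧
      (∃ y : List (Fin l), kRepr l N = v ++ z₀' :: (y ++ List.replicate (t + 1) z₀')) := by
  intro M
  have hu0' : ((u ++ [z₀]).head (by simp) : ℕ) ≠ 0 := by rwa [List.head_append_of_ne_nil hu]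
  have hv0' : ((v ++ [z₀']).head (by simp) : ℕ) ≠ 0 := by rwa [List.head_append_of_ne_nil hv]
  obtain ⟨j, hjx, hj⟩ := ((hind.frequently_prefix_kRepr_pow hk hl _ hu0').and_eventually
    (eventually_ge_atTop (t + 1))).exists
  obtain ⟨i, hiy, hi⟩ := ((hind.symm.frequently_prefix_kRepr_pow hl hk _ hv0').and_eventually
    (eventually_ge_atTop (max M (t + 1)))).exists
  rw [max_le_iff] at hi
  obtain ⟨x, hx⟩ := exists_kRepr_pow_mul_eq hk hz₀ (by positivity) hjx hi.2
  obtain ⟨y, hy⟩ := exists_kRepr_pow_mul_eq hl hz₀' (by positivity) hiy hj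
  refine ⟨k ^ i * l ^ j, ?_, ⟨i, j, rfl⟩, ⟨x, by simpa using hx⟩, ⟨y, ?_⟩⟩
  · calc M ≤ i := hi.1
      _ < k ^ i := Nat.lt_pow_self hk
      _ ≤ k ^ i * l ^ j := Nat.le_mul_of_pos_right _ (by positivity)
  · simpa [mul_comm (k ^ i)] using hy
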